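/- arXiv:1302.4703 — 2 statements merged into one kernel-verified Lean document; each statement's English description precedes it below -/
import Mathlib

section
/- Any two maximal caps in AG(2,3) are affinely equivalent. -/
/-- A cap in `AG(n,3)`: a finite set of points of `Fin n → ZMod 3` containing no
three distinct collinear points (three distinct points are collinear iff they sum to zero). -/
def IsCap {n : ℕ} (C : Finset (Fin n → ZMod 3)) : Prop :=
  ∀ x ∈ C, ∀ y ∈ C, ∀ z ∈ C, x ≠ y → x ≠ z → y ≠ z → x + y + z ≠ 0

/-- A maximal cap: a cap of largest possible size. -/
def MaximalCap {n : ℕ} (C : Finset (Fin n → ZMod 3)) : Prop :=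
  IsCap C ∧ ∀ D : Finset (Fin n → ZMod 3), IsCap D → D.card ≤ C.card

/-!
An affine line over `𝔽₃` through distinct points `p`, `q` has just one further point, `-(p + q)`, so
any three distinct points of a cap are affinely independent. Fix an affine basis `b₀, b₁, b₂` of the
plane inside a cap. A further point of the cap lies on none of the lines `bᵢbⱼ`, so its barycentric
coordinates are nonzero; being `±1` with sum `1`, exactly one of them is `-1`, and the point
completes the triangle to a parallelogram. The line through two of the three possible completions
passes through a vertex of the triangle, so a cap contains at most one of them. Hence a cap with at
least four points is a parallelogram, and any two parallelograms are affinely equivalent, because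
any two affine bases are.
-/

open Finset

section AffineBasis

variable {ι k V W P Q : Type*} [Ring k] [AddCommGroup V] [Module k V] [AddTorsor V P]
  [AddCommGroup W] [Module k W] [AddTorsor W Q]

lemma exists_affineEquiv_apply_affineBasis_eq (b : AffineBasis ι k P) (c : AffineBasis ι k Q) :
    ∃ T : P ≃ᵃ[k] Q, ∀ i, T (b i) = c i := by
  obtain ⟨o⟩ := b.nonempty
  let L : V ≃ₗ[k] W := (b.basisOf o).equiv (c.basisOf o) (Equiv.refl _)
  have hL : ∀ i, L (b i -ᵥ b o) = c i -ᵥ c o := by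
    intro i
    rcases eq_or_ne i o with rfl | hi
    · simp
    · simpa [L] using (b.basisOf o).equiv_apply ⟨i, hi⟩ (c.basisOf o) (Equiv.refl _)
  refine ⟨(AffineEquiv.vaddConst k (b o)).symm.trans
    (L.toAffineEquiv.trans (AffineEquiv.vaddConst k (c o))), fun i ↦ ?_⟩
  simp [hL]

lemma mem_affineSpan_image_compl_of_coord_eq_zero [Nontrivial k] [Finite ι] (b : AffineBasis ι k P)
    {i : ι} {x : P} (hx : b.coord i x = 0) : x ∈ affineSpan k (b '' {i}ᶜ) := by
  cases nonempty_fintype ι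
  rw [← b.affineCombination_coord_eq_self x]
  refine affineCombination_mem_affineSpan_image (b.sum_coord_apply_eq_one x) ?_ b
  rintro j - hj
  rwa [Set.notMem_compl_iff.1 hj]

end AffineBasis

section ZModThree

variable {V W : Type*} [AddCommGroup V] [Module (ZMod 3) V] [AddCommGroup W] [Module (ZMod 3) W]

lemma eq_or_eq_or_add_add_eq_zero_of_mem_affineSpan_pair {p q x : V}
    (hx : x ∈ line[ZMod 3, p, q]) : x = p ∨ x = q ∨ p + q + x = 0 := by
  obtain ⟨t, rfl⟩ := mem_affineSpan_pair_iff_exists_lineMap_eq.1 hx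
  obtain rfl | rfl | rfl : t = 0 ∨ t = 1 ∨ t = -1 := by clear hx; revert t; decide
  · simp
  · simp
  · refine .inr (.inr ?_)
    calc p + q + AffineMap.lineMap p q (-1 : ZMod 3) = 3 • p := by
          rw [AffineMap.lineMap_apply_module']; module
      _ = 0 := ZModModule.char_nsmul_eq_zero 3 p

/-- Affine maps preserve combinations with coefficients of sum `1`, and `4 = 1` in `𝔽₃`. -/
lemma affineMap_apply_add_add_add (f : V →ᵃ[ZMod 3] W) (x y z w : V) :
    f (x + y + z + w) = f x + f y + f z + f w := by
  have hf : ∀ v, f v = f.linear v + f 0 := congrFun f.decomp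
  calc f (x + y + z + w) = f.linear (x + y + z + w) + f 0 + 3 • f 0 := by
        rw [ZModModule.char_nsmul_eq_zero, add_zero, hf]
    _ = f x + f y + f z + f w := by
        rw [hf x, hf y, hf z, hf w]; simp only [map_add]; abel

lemma exists_eq_one_add_single_of_sum_eq_one :
    ∀ w : Fin 3 → ZMod 3, (∀ i, w i ≠ 0) → ∑ i, w i = 1 → ∃ i, w = 1 + Pi.single i 1 := by
  decide

lemma exists_eq_sum_add_of_coord_ne_zero (b : AffineBasis (Fin 3) (ZMod 3) V) {x : V}
    (hx : ∀ i, b.coord i x ≠ 0) : ∃ i, x = ∑ j, b j + b i := by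
  obtain ⟨i, hi⟩ := exists_eq_one_add_single_of_sum_eq_one (fun i ↦ b.coord i x) hx
    (b.sum_coord_apply_eq_one x)
  have hcoord : ∀ j, b.coord j x = 1 + (Pi.single i 1 : Fin 3 → ZMod 3) j :=
    congrFun hi
  refine ⟨i, ?_⟩
  calc x = ∑ j, b.coord j x • b j := (b.linear_combination_coord_eq_self x).symm
    _ = ∑ j, b j + b i := by
      simp [hcoord, add_smul, sum_add_distrib, Pi.single_apply]

lemma exists_sum_add_add_sum_add_add_eq_zero (b : Fin 3 → V) {i j : Fin 3} (hij : i ≠ j) :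
    ∃ k, (∑ l, b l + b i) + (∑ l, b l + b j) + b k = 0 := by
  obtain ⟨k, hki, hkj⟩ : ∃ k, k ≠ i ∧ k ≠ j := by revert i j; decide
  have huniv : (univ : Finset (Fin 3)) = {i, j, k} := by revert i j k; decide
  have hsum : ∑ l, b l = b i + b j + b k := by
    rw [huniv, sum_insert (by simp [hij, hki.symm]), sum_pair hkj.symm, add_assoc]
  refine ⟨k, ?_⟩
  calc (∑ l, b l + b i) + (∑ l, b l + b j) + b k
      = ∑ l, b l + ∑ l, b l + (b i + b j + b k) := by abel
    _ = 3 • ∑ l, b l := by rw [← hsum]; abel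
    _ = 0 := ZModModule.char_nsmul_eq_zero 3 _

/-- The parallelogram that completes the triangle `b` by a vertex opposite to `b i`. If `j` and `k`
are the two other indices, this vertex is `b j + b k - b i`; as `-1 = 2` in `𝔽₃`, it is encoded by
the expression `∑ l, b l + b i`, which does not mention `j` and `k`. -/
def parallelogram [DecidableEq V] (b : Fin 3 → V) (i : Fin 3) : Finset V :=
  insert (∑ j, b j + b i) (univ.image b)

lemma exists_affineEquiv_image_parallelogram_eq [DecidableEq V] [DecidableEq W]
    (b : AffineBasis (Fin 3) (ZMod 3) V) (c : AffineBasis (Fin 3) (ZMod 3) W) (i j : Fin 3) :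
    ∃ T : V ≃ᵃ[ZMod 3] W, (parallelogram b i).image T = parallelogram c j := by
  let σ : Equiv.Perm (Fin 3) := Equiv.swap i j
  obtain ⟨T, hT⟩ := exists_affineEquiv_apply_affineBasis_eq b (c.reindex σ.symm)
  replace hT : ∀ l, T (b l) = c (σ l) := by simpa using hT
  have hsum : T (∑ l, b l + b i) = ∑ l, c l + c j :=
    calc T (∑ l, b l + b i) = ∑ l, T (b l) + T (b i) := by
          simpa [Fin.sum_univ_three] using
            affineMap_apply_add_add_add T.toAffineMap (b 0) (b 1) (b 2) (b i)
      _ = ∑ l, c l + c j := by simp [hT, Equiv.sum_comp σ c, σ]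
  have himage : (univ.image b).image T = univ.image c := by
    have hcomp : T ∘ b = c ∘ σ := funext hT
    rw [image_image, hcomp, ← image_image, image_univ_equiv]
  exact ⟨T, by rw [parallelogram, image_insert, hsum, himage, parallelogram]⟩

end ZModThree

namespace IsCap

lemma notMem_affineSpan_pair {n : ℕ} {C : Finset (Fin n → ZMod 3)} (hC : IsCap C)
    {p q x : Fin n → ZMod 3} (hp : p ∈ C) (hq : q ∈ C) (hx : x ∈ C) (hpq : p ≠ q) (hxp : x ≠ p)
    (hxq : x ≠ q) : x ∉ line[ZMod 3, p, q] := by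
  intro h
  rcases eq_or_eq_or_add_add_eq_zero_of_mem_affineSpan_pair h with h | h | h
  · exact hxp h
  · exact hxq h
  · exact hC p hp q hq x hx hpq hxp.symm hxq.symm h

lemma eq_of_sum_add_mem {n : ℕ} {C : Finset (Fin n → ZMod 3)} (hC : IsCap C)
    {b : Fin 3 → Fin n → ZMod 3} (hinj : Function.Injective b) (hb : ∀ i, b i ∈ C) {i j : Fin 3}
    (hi : ∑ l, b l + b i ∈ C) (hib : ∀ l, ∑ m, b m + b i ≠ b l)
    (hj : ∑ l, b l + b j ∈ C) (hjb : ∀ l, ∑ m, b m + b j ≠ b l) : i = j := by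
  by_contra hij
  obtain ⟨k, hk⟩ := exists_sum_add_add_sum_add_add_eq_zero b hij
  have hne : ∑ l, b l + b i ≠ ∑ l, b l + b j := (add_right_injective _).ne (hinj.ne hij)
  exact hC _ hi _ hj _ (hb k) hne (hib k) (hjb k) hk

variable {C : Finset (Fin 2 → ZMod 3)}

lemma exists_affineBasis_mem (hC : IsCap C) (hcard : 2 < #C) :
    ∃ b : AffineBasis (Fin 3) (ZMod 3) (Fin 2 → ZMod 3), ∀ i, b i ∈ C := by
  obtain ⟨p, hp, q, hq, r, hr, hpq, hpr, hqr⟩ := two_lt_card.1 hcard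
  have hind : AffineIndependent (ZMod 3) ![p, q, r] :=
    affineIndependent_of_ne_of_mem_of_mem_of_notMem hpq (left_mem_affineSpan_pair _ p q)
      (right_mem_affineSpan_pair _ p q)
      (hC.notMem_affineSpan_pair hp hq hr hpq hpr.symm hqr.symm)
  have htop : affineSpan (ZMod 3) (Set.range ![p, q, r]) = ⊤ :=
    hind.affineSpan_eq_top_iff_card_eq_finrank_add_one.2 (by simp)
  have hmem : ∀ i, ![p, q, r] i ∈ C := by simp [Fin.forall_fin_succ, hp, hq, hr]
  exact ⟨⟨_, hind, htop⟩, hmem⟩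

lemma coord_ne_zero (hC : IsCap C) {b : AffineBasis (Fin 3) (ZMod 3) (Fin 2 → ZMod 3)}
    (hb : ∀ i, b i ∈ C) {x : Fin 2 → ZMod 3} (hx : x ∈ C) (hxb : ∀ i, x ≠ b i) (i : Fin 3) :
    b.coord i x ≠ 0 := by
  intro hi
  obtain ⟨j, k, hjk, hcompl⟩ : ∃ j k, j ≠ k ∧ ({i}ᶜ : Finset (Fin 3)) = {j, k} :=
    card_eq_two.1 (by simp [card_compl])
  have himage : b '' {i}ᶜ = {b j, b k} := by
    rw [← coe_singleton, ← coe_compl, hcompl, coe_pair, Set.image_pair]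
  have hline : x ∈ line[ZMod 3, b j, b k] :=
    himage ▸ mem_affineSpan_image_compl_of_coord_eq_zero b hi
  exact hC.notMem_affineSpan_pair (hb j) (hb k) hx (b.ind.injective.ne hjk) (hxb j) (hxb k) hline

lemma exists_eq_parallelogram (hC : IsCap C) (hcard : 3 < #C) :
    ∃ (b : AffineBasis (Fin 3) (ZMod 3) (Fin 2 → ZMod 3)) (i : Fin 3), C = parallelogram b i := by
  obtain ⟨b, hb⟩ := hC.exists_affineBasis_mem (Nat.lt_of_succ_lt hcard)
  have hcompletion : ∀ y ∈ C, (∀ l, y ≠ b l) → ∃ j, y = ∑ l, b l + b j := fun y hy hyb ↦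
    exists_eq_sum_add_of_coord_ne_zero b (hC.coord_ne_zero hb hy hyb)
  obtain ⟨x, hx, hxb⟩ : ∃ x ∈ C, x ∉ univ.image b :=
    exists_mem_notMem_of_card_lt_card (card_image_le.trans_lt hcard)
  replace hxb : ∀ l, x ≠ b l := by simpa [eq_comm] using hxb
  obtain ⟨i, rfl⟩ := hcompletion x hx hxb
  refine ⟨b, i, Subset.antisymm (fun y hy ↦ ?_) ?_⟩
  · by_cases hyb : ∀ l, y ≠ b l
    · obtain ⟨j, rfl⟩ := hcompletion y hy hyb
      obtain rfl := hC.eq_of_sum_add_mem b.ind.injective hb hx hxb hy hyb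
      exact mem_insert_self _ _
    · push Not at hyb
      obtain ⟨l, rfl⟩ := hyb
      exact mem_insert_of_mem (mem_image_of_mem b (mem_univ l))
  · exact insert_subset hx (image_subset_iff.2 fun l _ ↦ hb l)

end IsCap

lemma exists_isCap_card_eq_four : ∃ S : Finset (Fin 2 → ZMod 3), IsCap S ∧ #S = 4 :=
  ⟨{![0, 0], ![1, 0], ![0, 1], ![1, 1]}, by unfold IsCap; decide, rfl⟩

lemma MaximalCap.three_lt_card {C : Finset (Fin 2 → ZMod 3)} (hC : MaximalCap C) : 3 < #C := by
  obtain ⟨S, hS, hcard⟩ := exists_isCap_card_eq_four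
  have hle : #S ≤ #C := hC.2 S hS
  lia

/-- Any two maximal caps in `AG(2,3)` are affinely equivalent. -/
theorem maximal_caps_AG23_affinely_equivalent
    (C D : Finset (Fin 2 → ZMod 3)) (hC : MaximalCap C) (hD : MaximalCap D) :
    ∃ T : (Fin 2 → ZMod 3) ≃ᵃ[ZMod 3] (Fin 2 → ZMod 3),
      C.image (fun x => T x) = D := by
  obtain ⟨b, i, rfl⟩ := hC.1.exists_eq_parallelogram hC.three_lt_card
  obtain ⟨c, j, rfl⟩ := hD.1.exists_eq_parallelogram hD.three_lt_card
  exact exists_affineEquiv_image_parallelogram_eq b c i j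
end

section
/- For every maximal cap C in AG(3,3), the sum of the coordinate vectors of the points of C is the zero vector (mod 3). -/
/-!
In characteristic 3 the midpoint of `x` and `y` is `-(x + y)`, so caps are the sets without
nontrivial three-term arithmetic progressions.

Fix a hyperplane `H` and a flat of codimension 2 inside it. The four hyperplanes through this flat
cover the space and meet pairwise only in it, so if all points of a cap in `H` lie on the flat, the
other three hyperplanes carry the remaining points. In the plane, where lines carry at most 2 points
of a cap, this shows that a cap tangent to some line has at most `1 + 3 * 1 = 4` points. Since the
lines of a parallel class would split a 5-point cap as `2 + 2 + 1`, every plane cap has at most 4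
points. In 3-space it then shows that a cap meeting some plane in exactly 2 points has at most
`2 + 3 * 2 = 8` points. So a parallel class of planes splits a 9-point cap as `3 + 3 + 3` or
`4 + 4 + 1`; these sizes agree mod 3, so every linear functional sums to zero over the cap.

A 10-point cap cannot exist: deleting any one point leaves a cap with sum zero, which would make
every point equal to the total sum. The paraboloid `z = x² + y²` is a cap with `9` points.
-/

section

open Finset Module

theorem card_eq_add_card_filter_zmod_three {α : Type*} (s : Finset α) (f : α → ZMod 3) :
    #s = #{x ∈ s | f x = 0} + #{x ∈ s | f x = 1} + #{x ∈ s | f x = 2} :=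
  (card_eq_sum_card_fiberwise fun _ _ => mem_univ _).trans (Fin.sum_univ_three _)

theorem sum_zmod_three_eq_card_sub_card {α : Type*} (s : Finset α) (f : α → ZMod 3) :
    ∑ x ∈ s, f x = #{x ∈ s | f x = 1} - #{x ∈ s | f x = 2} :=
  calc ∑ x ∈ s, f x = ∑ c, (#{x ∈ s | f x = c} : ZMod 3) * c := by
        simp only [← sum_fiberwise' s f fun c => c, sum_const, nsmul_eq_mul]
    _ = #{x ∈ s | f x = 0} * 0 + #{x ∈ s | f x = 1} * 1 + #{x ∈ s | f x = 2} * 2 :=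
        Fin.sum_univ_three _
    _ = #{x ∈ s | f x = 1} - #{x ∈ s | f x = 2} := by
        rw [show (2 : ZMod 3) = -1 by decide]
        ring

/- The four lines through a point `(a, b)` of the affine plane over `ZMod 3` cover every other
point exactly once and `(a, b)` four times. -/
theorem card_filter_pencil {α : Type*} (s : Finset α) (f g : α → ZMod 3) (a b : ZMod 3) :
    #{x ∈ s | f x = a} + #{x ∈ s | g x = b} + #{x ∈ s | f x + g x = a + b} +
      #{x ∈ s | f x - g x = a - b} = #s + 3 * #{x ∈ s | f x = a ∧ g x = b} := by
  have pointwise : ∀ u v a b : ZMod 3, (if u = a then 1 else 0) + (if v = b then 1 else 0) +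
      (if u + v = a + b then 1 else 0) + (if u - v = a - b then 1 else 0) =
        1 + 3 * (if u = a ∧ v = b then 1 else 0) := by
    decide
  rw [card_eq_sum_ones s]
  simp only [card_filter, ← sum_add_distrib, mul_sum, pointwise]

theorem not_threeAPFree_univ (G : Type*) [AddGroup G] [Nontrivial G] :
    ¬ ThreeAPFree (Set.univ : Set G) := by
  intro h
  obtain ⟨v, hv⟩ := exists_ne (0 : G)
  exact hv (h (Set.mem_univ v) (Set.mem_univ 0) (Set.mem_univ (-v)) (by
    rw [add_neg_cancel, add_zero]))

theorem card_threeAPFree_fiber_le {R V W : Type*} [Ring R] [AddCommGroup V] [Module R V]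
    [AddCommGroup W] [Module R W] [DecidableEq W] (f : V →ₗ[R] W) {m : ℕ}
    (hm : ∀ t : Finset f.ker, ThreeAPFree (t : Set f.ker) → #t ≤ m)
    {s : Finset V} (hs : ThreeAPFree (s : Set V)) (c : W) : #{x ∈ s | f x = c} ≤ m := by
  obtain h | ⟨p, hp⟩ := {x ∈ s | f x = c}.eq_empty_or_nonempty
  · simp [h]
  have hfp : f p = c := (mem_filter.1 hp).2
  let translate : f.ker → V := fun v => p + v
  have translate_injective : translate.Injective :=
    (add_right_injective p).comp Subtype.val_injective
  let t : Finset f.ker := s.preimage translate translate_injective.injOn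
  have ht : ThreeAPFree (t : Set f.ker) := by
    intro a ha b hb c hc habc
    refine translate_injective (hs (mem_preimage.1 ha) (mem_preimage.1 hb) (mem_preimage.1 hc) ?_)
    have habc' : (a : V) + c = b + b := congrArg Subtype.val habc
    rw [add_add_add_comm, habc', add_add_add_comm]
  calc #{x ∈ s | f x = c} ≤ #(t.map ⟨translate, translate_injective⟩) := by
        refine card_le_card fun x hx => ?_
        obtain ⟨hxs, hfx⟩ := mem_filter.1 hx
        have hker : x - p ∈ f.ker := by rw [LinearMap.mem_ker, map_sub, hfx, hfp, sub_self]
        refine mem_map.2 ⟨⟨x - p, hker⟩, mem_preimage.2 ?_, add_sub_cancel p x⟩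
        rwa [show translate ⟨x - p, hker⟩ = x from add_sub_cancel p x]
    _ = #t := card_map _
    _ ≤ m := hm t ht

theorem finrank_ker_of_ne_zero {K V : Type*} [Field K] [AddCommGroup V] [Module K V] {n : ℕ}
    (hV : finrank K V = n + 1) {f : Dual K V} (hf : f ≠ 0) : finrank K (LinearMap.ker f) = n := by
  have := FiniteDimensional.of_finrank_eq_succ hV
  have := Dual.finrank_ker_add_one_of_ne_zero hf
  lia

variable {V : Type*} [AddCommGroup V] [Module (ZMod 3) V]

theorem add_self_add_self_eq_zero (x : V) : x + x + x = 0 := by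
  rw [← ZModModule.char_nsmul_eq_zero 3 x, succ_nsmul, two_nsmul]

theorem add_eq_add_self_iff_add_add_eq_zero {x y z : V} : x + z = y + y ↔ x + y + z = 0 := by
  rw [add_right_comm, ← add_self_add_self_eq_zero y, add_left_inj]

theorem threeAPFree_iff_add_add_ne_zero {s : Set V} :
    ThreeAPFree s ↔ ∀ x ∈ s, ∀ y ∈ s, ∀ z ∈ s, x ≠ y → x ≠ z → y ≠ z → x + y + z ≠ 0 := by
  constructor
  · exact fun hs x hx y hy z hz hxy _ _ h =>
      hxy (hs hx hy hz (add_eq_add_self_iff_add_add_eq_zero.2 h))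
  · intro hs x hx y hy z hz h
    by_contra hxy
    have hyz : y ≠ z := by
      rintro rfl
      exact hxy (add_right_cancel h)
    have hsum : x + y + z = 0 := add_eq_add_self_iff_add_add_eq_zero.1 h
    have hxz : x ≠ z := by
      rintro rfl
      rw [add_right_comm, ← add_self_add_self_eq_zero x, add_right_inj] at hsum
      exact hxy hsum.symm
    exact hs x hx y hy z hz hxy hxz hyz hsum

theorem card_add_two_mul_card_section_le {s : Finset V} {m : ℕ}
    (hm : ∀ g : Dual (ZMod 3) V, g ≠ 0 → ∀ c, #{x ∈ s | g x = c} ≤ m) {f : Dual (ZMod 3) V}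
    {W : Submodule (ZMod 3) V} (hW : W < LinearMap.ker f) {p : V}
    (hp : ∀ x ∈ s, f x = f p → x - p ∈ W) : #s + 2 * #{x ∈ s | f x = f p} ≤ 3 * m := by
  -- A functional `g` vanishing on `W` but not at some `v ∈ ker f` is independent of `f`: none of
  -- `g`, `f + g` and `f - g` vanishes at `v`.
  obtain ⟨-, v, hfv, hvW⟩ := SetLike.lt_iff_le_and_exists.1 hW
  obtain ⟨g, hgv, hWg⟩ := W.exists_le_ker_of_notMem hvW
  have hfv : f v = 0 := hfv
  have hg : g ≠ 0 := by
    rintro rfl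
    exact hgv rfl
  have hadd : f + g ≠ 0 := fun h => hgv (by simpa [hfv] using LinearMap.congr_fun h v)
  have hsub : f - g ≠ 0 := fun h => hgv (by simpa [hfv] using LinearMap.congr_fun h v)
  have hsection : {x ∈ s | f x = f p ∧ g x = g p} = {x ∈ s | f x = f p} :=
    filter_congr fun x hx => and_iff_left_of_imp fun hfx =>
      sub_eq_zero.1 ((map_sub g x p).symm.trans (hWg (hp x hx hfx)))
  have hpencil := card_filter_pencil s f g (f p) (g p)
  rw [hsection] at hpencil
  have bound_g := hm g hg (g p)
  have bound_add : #{x ∈ s | f x + g x = f p + g p} ≤ m := hm (f + g) hadd _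
  have bound_sub : #{x ∈ s | f x - g x = f p - g p} ≤ m := hm (f - g) hsub _
  lia

theorem card_threeAPFree_le_two_of_finrank_eq_one (hV : finrank (ZMod 3) V = 1) {s : Finset V}
    (hs : ThreeAPFree (s : Set V)) : #s ≤ 2 := by
  have := finite_of_finrank_pos (hV.symm ▸ one_pos)
  have := nontrivial_of_finrank_pos (hV.symm ▸ one_pos)
  have := Module.finite_of_finite (ZMod 3) (M := V)
  have := Fintype.ofFinite V
  have hcard : Fintype.card V = 3 := by
    rw [card_eq_pow_finrank (K := ZMod 3), hV, ZMod.card, pow_one]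
  have hlt : #s < Fintype.card V :=
    (card_lt_iff_ne_univ s).2 fun h => not_threeAPFree_univ V (by rwa [h, coe_univ] at hs)
  lia

theorem card_threeAPFree_section_le_two_of_finrank_eq_two (hV : finrank (ZMod 3) V = 2)
    {s : Finset V} (hs : ThreeAPFree (s : Set V)) {f : Dual (ZMod 3) V} (hf : f ≠ 0) (c : ZMod 3) :
    #{x ∈ s | f x = c} ≤ 2 :=
  card_threeAPFree_fiber_le f
    (fun _ ht => card_threeAPFree_le_two_of_finrank_eq_one (finrank_ker_of_ne_zero hV hf) ht) hs c

theorem card_threeAPFree_le_four_of_card_section_eq_one (hV : finrank (ZMod 3) V = 2)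
    {s : Finset V} (hs : ThreeAPFree (s : Set V)) {f : Dual (ZMod 3) V} (hf : f ≠ 0) {c : ZMod 3}
    (hc : #{x ∈ s | f x = c} = 1) : #s ≤ 4 := by
  obtain ⟨p, hp⟩ := card_eq_one.1 hc
  have hfp : f p = c := (mem_filter.1 (hp.ge (mem_singleton_self p))).2
  have hker : Nontrivial (LinearMap.ker f) :=
    nontrivial_of_finrank_pos ((finrank_ker_of_ne_zero hV hf).symm ▸ one_pos)
  have hbot : ⊥ < LinearMap.ker f := bot_lt_iff_ne_bot.2 (Submodule.nontrivial_iff_ne_bot.1 hker)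
  have hsection : ∀ x ∈ s, f x = f p → x - p ∈ (⊥ : Submodule (ZMod 3) V) := by
    intro x hx hfx
    have hxp : x ∈ ({p} : Finset V) := hp.le (mem_filter.2 ⟨hx, hfx.trans hfp⟩)
    rw [mem_singleton.1 hxp, sub_self]
    exact zero_mem _
  have := card_add_two_mul_card_section_le
    (fun _ hg => card_threeAPFree_section_le_two_of_finrank_eq_two hV hs hg) hbot hsection
  rw [hfp, hc] at this
  lia

theorem card_threeAPFree_le_four_of_finrank_eq_two (hV : finrank (ZMod 3) V = 2) {s : Finset V}
    (hs : ThreeAPFree (s : Set V)) : #s ≤ 4 := by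
  by_contra! hcard
  obtain ⟨t, hts, ht⟩ := exists_subset_card_eq (show 5 ≤ #s from hcard)
  have htfree : ThreeAPFree (t : Set V) := hs.mono (coe_subset.2 hts)
  have := nontrivial_of_finrank_pos (hV.symm ▸ two_pos)
  obtain ⟨f, hf⟩ := exists_ne (0 : Dual (ZMod 3) V)
  have hle := card_threeAPFree_section_le_two_of_finrank_eq_two hV htfree hf
  have hne (c : ZMod 3) : #{x ∈ t | f x = c} ≠ 1 := fun hc => by
    have := card_threeAPFree_le_four_of_card_section_eq_one hV htfree hf hc
    lia
  have := card_eq_add_card_filter_zmod_three t f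
  have := hle 0
  have := hle 1
  have := hle 2
  have := hne 0
  have := hne 1
  have := hne 2
  lia

theorem card_threeAPFree_section_le_four_of_finrank_eq_three (hV : finrank (ZMod 3) V = 3)
    {s : Finset V} (hs : ThreeAPFree (s : Set V)) {f : Dual (ZMod 3) V} (hf : f ≠ 0) (c : ZMod 3) :
    #{x ∈ s | f x = c} ≤ 4 :=
  card_threeAPFree_fiber_le f
    (fun _ ht => card_threeAPFree_le_four_of_finrank_eq_two (finrank_ker_of_ne_zero hV hf) ht) hs c

theorem card_threeAPFree_le_eight_of_card_section_eq_two (hV : finrank (ZMod 3) V = 3)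
    {s : Finset V} (hs : ThreeAPFree (s : Set V)) {f : Dual (ZMod 3) V} (hf : f ≠ 0) {c : ZMod 3}
    (hc : #{x ∈ s | f x = c} = 2) : #s ≤ 8 := by
  classical
  obtain ⟨p, q, hpq, hH⟩ := card_eq_two.1 hc
  have hfp : f p = c := (mem_filter.1 (hH.ge (mem_insert_self p {q}))).2
  have hfq : f q = c := (mem_filter.1 (hH.ge (mem_insert_of_mem (mem_singleton_self q)))).2
  have := FiniteDimensional.of_finrank_eq_succ hV
  have hspan : ZMod 3 ∙ (q - p) < LinearMap.ker f := by
    refine Submodule.lt_of_le_of_finrank_lt_finrank ?_ ?_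
    · rw [Submodule.span_singleton_le_iff_mem, LinearMap.mem_ker, map_sub, hfp, hfq, sub_self]
    · rw [finrank_span_singleton (sub_ne_zero.2 hpq.symm), finrank_ker_of_ne_zero hV hf]
      exact one_lt_two
  have hsection : ∀ x ∈ s, f x = f p → x - p ∈ ZMod 3 ∙ (q - p) := by
    intro x hx hfx
    have hxpq : x ∈ ({p, q} : Finset V) := hH.le (mem_filter.2 ⟨hx, hfx.trans hfp⟩)
    obtain rfl | hxq := mem_insert.1 hxpq
    · rw [sub_self]
      exact zero_mem _
    · rw [mem_singleton.1 hxq]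
      exact Submodule.mem_span_singleton_self _
  have := card_add_two_mul_card_section_le
    (fun _ hg => card_threeAPFree_section_le_four_of_finrank_eq_three hV hs hg) hspan hsection
  rw [hfp, hc] at this
  lia

theorem sum_threeAPFree_eq_zero_of_card_eq_nine (hV : finrank (ZMod 3) V = 3) {s : Finset V}
    (hs : ThreeAPFree (s : Set V)) (hcard : #s = 9) : ∑ x ∈ s, x = 0 := by
  refine (forall_dual_apply_eq_zero_iff (ZMod 3) _).1 fun f => ?_
  obtain rfl | hf := eq_or_ne f 0
  · rfl
  have hle := card_threeAPFree_section_le_four_of_finrank_eq_three hV hs hf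
  have hne (c : ZMod 3) : #{x ∈ s | f x = c} ≠ 2 := fun hc => by
    have := card_threeAPFree_le_eight_of_card_section_eq_two hV hs hf hc
    lia
  have hmod : #{x ∈ s | f x = 1} ≡ #{x ∈ s | f x = 2} [MOD 3] := by
    have := card_eq_add_card_filter_zmod_three s f
    have := hle 0
    have := hle 1
    have := hle 2
    have := hne 0
    have := hne 1
    have := hne 2
    unfold Nat.ModEq
    lia
  rw [map_sum, sum_zmod_three_eq_card_sub_card, sub_eq_zero, ZMod.natCast_eq_natCast_iff]
  exact hmod

theorem card_threeAPFree_le_nine_of_finrank_eq_three (hV : finrank (ZMod 3) V = 3) {s : Finset V}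
    (hs : ThreeAPFree (s : Set V)) : #s ≤ 9 := by
  classical
  by_contra! hcard
  obtain ⟨t, hts, ht⟩ := exists_subset_card_eq (show 10 ≤ #s from hcard)
  have eq_sum : ∀ x ∈ t, x = ∑ y ∈ t, y := by
    intro x hx
    have hfree : ThreeAPFree (t.erase x : Set V) :=
      hs.mono (coe_subset.2 ((erase_subset x t).trans hts))
    have herase : ∑ y ∈ t.erase x, y = 0 :=
      sum_threeAPFree_eq_zero_of_card_eq_nine hV hfree (by rw [card_erase_of_mem hx, ht])
    rw [← add_sum_erase t _ hx, herase, add_zero]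
  have : #t ≤ 1 := card_le_one.2 fun x hx y hy => (eq_sum x hx).trans (eq_sum y hy).symm
  lia

theorem isCap_iff_threeAPFree {n : ℕ} {C : Finset (Fin n → ZMod 3)} :
    IsCap C ↔ ThreeAPFree (C : Set (Fin n → ZMod 3)) :=
  threeAPFree_iff_add_add_ne_zero.symm

/-- The elliptic paraboloid `z = x² + y²` in `AG(3,3)`. -/
def paraboloid : Finset (Fin 3 → ZMod 3) :=
  univ.image fun v : ZMod 3 × ZMod 3 => ![v.1, v.2, v.1 ^ 2 + v.2 ^ 2]

theorem card_paraboloid : #paraboloid = 9 := by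
  refine (card_image_of_injective _ fun v w h => ?_).trans (by rfl)
  exact Prod.ext (congrFun h 0) (congrFun h 1)

theorem isCap_paraboloid : IsCap paraboloid := by
  have anisotropic : ∀ u v : ZMod 3, u ^ 2 + v ^ 2 = 0 → u = 0 ∧ v = 0 := by decide
  refine isCap_iff_threeAPFree.2 fun x hx y hy z hz h => ?_
  obtain ⟨⟨a, a'⟩, -, rfl⟩ := mem_image.1 hx
  obtain ⟨⟨b, b'⟩, -, rfl⟩ := mem_image.1 hy
  obtain ⟨⟨c, c'⟩, -, rfl⟩ := mem_image.1 hz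
  have h0 : a + c = b + b := congrFun h 0
  have h1 : a' + c' = b' + b' := congrFun h 1
  have h2 : a ^ 2 + a' ^ 2 + (c ^ 2 + c' ^ 2) = b ^ 2 + b' ^ 2 + (b ^ 2 + b' ^ 2) := congrFun h 2
  obtain rfl : c = 2 * b - a := by linear_combination h0
  obtain rfl : c' = 2 * b' - a' := by linear_combination h1
  have hthree : (3 : ZMod 3) = 0 := rfl
  -- Along the progression the second difference of `x² + y²` is twice its value on the step.
  obtain ⟨hab, hab'⟩ := anisotropic (a - b) (a' - b')
    (by linear_combination 2 * h2 - ((a - b) ^ 2 + (a' - b') ^ 2) * hthree)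
  rw [sub_eq_zero.1 hab, sub_eq_zero.1 hab']

end

/-- The points of a maximal cap in `AG(3,3)` sum to the zero vector mod 3. -/
theorem maximal_cap_AG33_sum_zero
    (C : Finset (Fin 3 → ZMod 3)) (hC : MaximalCap C) :
    ∑ x ∈ C, x = 0 := by
  have hcap := isCap_iff_threeAPFree.1 hC.1
  have hV : Module.finrank (ZMod 3) (Fin 3 → ZMod 3) = 3 := Module.finrank_fin_fun (ZMod 3)
  have hle : C.card ≤ 9 := card_threeAPFree_le_nine_of_finrank_eq_three hV hcap
  have hge : 9 ≤ C.card := card_paraboloid ▸ hC.2 paraboloid isCap_paraboloid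
  exact sum_threeAPFree_eq_zero_of_card_eq_nine hV hcap (le_antisymm hle hge)
end
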